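/- arXiv:2102.04338 — 3 statements merged into one kernel-verified Lean document; each statement's English description precedes it below -/
import Mathlib

section
/- Assume the width condition min(d_0, d_1, …, d_{H+1}) = min(d_0, d_{H+1}) =: k. If (W_1, …, W_{H+1}) is a critical point of L such that rank(W_{H+1} W_H ⋯ W_1) = k, then it is a global minimum of L, i.e., L(W_1, …, W_{H+1}) ≤ L(V_1, …, V_{H+1}) for every tuple (V_1, …, V_{H+1}) with V_i ∈ ℝ^{d_i × d_{i−1}}. -/
attribute [local instance] Matrix.frobeniusNormedAddCommGroup Matrix.frobeniusNormedSpace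

/-- The chained product `W_{j} ⋯ W_1` of the first `j` weight matrices. -/
noncomputable def netProdUpTo {H : ℕ} {d : Fin (H + 2) → ℕ}
    (W : ∀ i : Fin (H + 1), Matrix (Fin (d i.succ)) (Fin (d i.castSucc)) ℝ)
    (j : Fin (H + 2)) : Matrix (Fin (d j)) (Fin (d 0)) ℝ :=
  Fin.induction (motive := fun j => Matrix (Fin (d j)) (Fin (d 0)) ℝ)
    1 (fun i acc => W i * acc) j

/-- The full chained product `W_{H+1} W_H ⋯ W_1`. -/
noncomputable def netProd {H : ℕ} {d : Fin (H + 2) → ℕ}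
    (W : ∀ i : Fin (H + 1), Matrix (Fin (d i.succ)) (Fin (d i.castSucc)) ℝ) :
    Matrix (Fin (d (Fin.last (H + 1)))) (Fin (d 0)) ℝ :=
  netProdUpTo W (Fin.last (H + 1))

/-- The squared-error loss `L(W) = ½‖W_{H+1}⋯W_1 X − Y‖_F²`. -/
noncomputable def netLoss {H m : ℕ} {d : Fin (H + 2) → ℕ}
    (X : Matrix (Fin (d 0)) (Fin m) ℝ)
    (Y : Matrix (Fin (d (Fin.last (H + 1)))) (Fin m) ℝ)
    (W : ∀ i : Fin (H + 1), Matrix (Fin (d i.succ)) (Fin (d i.castSucc)) ℝ) : ℝ :=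
  (1 / 2) * ∑ a, ∑ b, ((netProd W * X - Y) a b) ^ 2

/-!
As a function of the end-to-end matrix `P` the loss is convex, so a zero of its derivative in `P`
is a global minimum. If `netProd W` has rank `d 0` or `d (Fin.last (H + 1))`, varying only the
last or only the first weight matrix already moves `netProd W` in every direction, so `netProd` is
a submersion at `W`. By the chain rule a critical point of the composite is then a critical point
of the convex loss.
-/

open Matrix

theorem isMinOn_of_convexOn_of_hasFDerivAt_zero {E : Type*} [NormedAddCommGroup E]
    [NormedSpace ℝ E] {s : Set E} {f : E → ℝ} {x : E} (hf : ConvexOn ℝ s f) (hx : x ∈ s)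
    (hfx : HasFDerivAt f (0 : E →L[ℝ] ℝ) x) : IsMinOn f s x := by
  intro y hy
  have hline : HasDerivAt (f ∘ AffineMap.lineMap x y) 0 (0 : ℝ) := by
    rw [← AffineMap.lineMap_apply_zero (k := ℝ) x y] at hfx
    simpa using hfx.comp_hasDerivAt 0 AffineMap.hasDerivAt_lineMap
  have hslope := (hf.comp_affineMap (AffineMap.lineMap x y)).le_slope_of_hasDerivAt
    (by simpa using hx) (by simpa using hy) zero_lt_one hline
  simpa [slope_def_field] using hslope

theorem fderiv_eq_zero_of_fderiv_comp_eq_zero_of_surjective {𝕜 E F G : Type*}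
    [NontriviallyNormedField 𝕜] [NormedAddCommGroup E] [NormedSpace 𝕜 E] [NormedAddCommGroup F]
    [NormedSpace 𝕜 F] [NormedAddCommGroup G] [NormedSpace 𝕜 G] {f : F → G} {g : E → F} {x : E}
    (hf : DifferentiableAt 𝕜 f (g x)) (hg : DifferentiableAt 𝕜 g x)
    (hsurj : Function.Surjective (fderiv 𝕜 g x)) (hcrit : fderiv 𝕜 (f ∘ g) x = 0) :
    fderiv 𝕜 f (g x) = 0 := by
  ext v
  obtain ⟨u, rfl⟩ := hsurj v
  rw [← ContinuousLinearMap.comp_apply, ← fderiv_comp x hf hg, hcrit]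
  rfl

section MatrixRank

variable {K m n o : Type*} [Field K] [Fintype m] [Fintype n] [Fintype o]

theorem exists_mul_eq_one_of_rank_eq_card_height [DecidableEq m] {A : Matrix m n K}
    (hA : A.rank = Fintype.card m) : ∃ R : Matrix n m K, A * R = 1 := by
  rw [← mulVec_surjective_iff_exists_right_inverse]
  have hrange : LinearMap.range A.mulVecLin = ⊤ :=
    Submodule.eq_top_of_finrank_eq (by rwa [Module.finrank_fintype_fun_eq_card])
  exact LinearMap.range_eq_top.mp hrange

theorem exists_mul_eq_one_of_rank_eq_card_width [DecidableEq n] {A : Matrix m n K}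
    (hA : A.rank = Fintype.card n) : ∃ L : Matrix n m K, L * A = 1 := by
  obtain ⟨R, hR⟩ := exists_mul_eq_one_of_rank_eq_card_height (A.rank_transpose.trans hA)
  exact ⟨Rᵀ, by simpa using congrArg transpose hR⟩

theorem surjective_mul_mul_of_rank_eq_card {p : Type*} [Fintype p] {A : Matrix m n K}
    {B : Matrix o p K} (hA : A.rank = Fintype.card m) (hB : B.rank = Fintype.card p) :
    Function.Surjective fun D : Matrix n o K => A * (D * B) := by
  classical
  obtain ⟨R, hR⟩ := exists_mul_eq_one_of_rank_eq_card_height hA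
  obtain ⟨L, hL⟩ := exists_mul_eq_one_of_rank_eq_card_width hB
  intro C
  refine ⟨R * C * L, ?_⟩
  calc A * (R * C * L * B) = (A * R) * C * (L * B) := by simp only [Matrix.mul_assoc]
    _ = C := by rw [hR, hL, Matrix.one_mul, Matrix.mul_one]

end MatrixRank

section MatrixCalculus

variable {𝕜 E R l m n : Type*} [NontriviallyNormedField 𝕜] [NormedAddCommGroup E] [NormedSpace 𝕜 E]
  [NormedRing R] [NormedAlgebra 𝕜 R] [Fintype m] [Finite n]

theorem differentiable_matrix_iff {f : E → Matrix l n R} :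
    Differentiable 𝕜 f ↔ ∀ i j, Differentiable 𝕜 fun x => f x i j := by
  have := Fintype.ofFinite n
  have hpi (g : E → l → n → R) : Differentiable 𝕜 g ↔ ∀ i j, Differentiable 𝕜 fun x => g x i j := by
    simp only [differentiable_pi]
  exact hpi f

theorem differentiable_matrix_mul {f : E → Matrix l m R} {g : E → Matrix m n R}
    (hf : Differentiable 𝕜 f) (hg : Differentiable 𝕜 g) : Differentiable 𝕜 fun x => f x * g x := by
  rw [differentiable_matrix_iff] at hf hg ⊢
  intro i j
  simp only [mul_apply]
  fun_prop

end MatrixCalculus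

section SquaredError

variable {l m n : Type*} [Fintype l] [Fintype m] [Fintype n]

/-- The squared error `½‖P X − Y‖_F²` as a function of the end-to-end matrix `P`. -/
noncomputable def squaredError (X : Matrix n m ℝ) (Y : Matrix l m ℝ) (P : Matrix l n ℝ) : ℝ :=
  (1 / 2) * ∑ a, ∑ b, ((P * X - Y) a b) ^ 2

theorem convexOn_squaredError (X : Matrix n m ℝ) (Y : Matrix l m ℝ) :
    ConvexOn ℝ Set.univ (squaredError X Y) := by
  have hnorm (A : Matrix l m ℝ) : ‖A‖ ^ 2 = ∑ a, ∑ b, A a b ^ 2 := by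
    rw [frobenius_norm_def, ← Real.sqrt_eq_rpow, Real.sq_sqrt (by positivity)]
    simp
  have hsq : ConvexOn ℝ Set.univ fun A : Matrix l m ℝ => ‖A‖ ^ 2 :=
    convexOn_univ_norm.pow (fun _ _ => norm_nonneg _) 2
  have haffine := hsq.comp_affineMap
    ((mulRightLinearMap l ℝ X).toAffineMap - AffineMap.const ℝ _ Y)
  refine (haffine.smul (by norm_num : (0 : ℝ) ≤ 1 / 2)).congr fun P _ => ?_
  simp [squaredError, hnorm]

theorem differentiable_squaredError (X : Matrix n m ℝ) (Y : Matrix l m ℝ) :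
    Differentiable ℝ (squaredError X Y) := by
  have hentry : ∀ a b, Differentiable ℝ fun P : Matrix l n ℝ => (P * X) a b :=
    differentiable_matrix_iff.mp
      (differentiable_matrix_mul differentiable_fun_id (differentiable_const X))
  exact (Differentiable.fun_sum fun a _ => Differentiable.fun_sum fun b _ =>
    ((hentry a b).sub_const (Y a b)).pow 2).const_mul (1 / 2)

end SquaredError

section LinearNetwork

variable {H : ℕ} {d : Fin (H + 2) → ℕ}
  (W : ∀ i : Fin (H + 1), Matrix (Fin (d i.succ)) (Fin (d i.castSucc)) ℝ)

/-- The chained product `W_{H+1} ⋯ W_{j+1}` of the weight matrices above layer `j`, so that it is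
complementary to `netProdUpTo W j`. -/
noncomputable def netProdFrom (j : Fin (H + 2)) :
    Matrix (Fin (d (Fin.last (H + 1)))) (Fin (d j)) ℝ :=
  Fin.reverseInduction (motive := fun j => Matrix (Fin (d (Fin.last (H + 1)))) (Fin (d j)) ℝ)
    1 (fun i acc => acc * W i) j

theorem netProdUpTo_zero : netProdUpTo W 0 = 1 := rfl

theorem netProdUpTo_succ (i : Fin (H + 1)) :
    netProdUpTo W i.succ = W i * netProdUpTo W i.castSucc := by
  simp [netProdUpTo]

theorem netProdFrom_last : netProdFrom W (Fin.last (H + 1)) = 1 := by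
  simp [netProdFrom]

theorem netProdFrom_castSucc (i : Fin (H + 1)) :
    netProdFrom W i.castSucc = netProdFrom W i.succ * W i := by
  simp [netProdFrom]

theorem netProdFrom_mul_netProdUpTo (j : Fin (H + 2)) :
    netProdFrom W j * netProdUpTo W j = netProd W := by
  induction j using Fin.reverseInduction with
  | last => rw [netProdFrom_last, Matrix.one_mul, netProd]
  | cast i ih => rw [← ih, netProdFrom_castSucc, netProdUpTo_succ, Matrix.mul_assoc]

variable {W} in
theorem netProdUpTo_congr {V : ∀ i : Fin (H + 1), Matrix (Fin (d i.succ)) (Fin (d i.castSucc)) ℝ}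
    {j : Fin (H + 2)} (hVW : ∀ i : Fin (H + 1), i.castSucc < j → V i = W i) :
    netProdUpTo V j = netProdUpTo W j := by
  induction j using Fin.induction with
  | zero => rfl
  | succ i ih =>
    rw [netProdUpTo_succ, netProdUpTo_succ, hVW i i.castSucc_lt_succ,
      ih fun k hk => hVW k (hk.trans i.castSucc_lt_succ)]

variable {W} in
theorem netProdFrom_congr {V : ∀ i : Fin (H + 1), Matrix (Fin (d i.succ)) (Fin (d i.castSucc)) ℝ}
    {j : Fin (H + 2)} (hVW : ∀ i : Fin (H + 1), j ≤ i.castSucc → V i = W i) :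
    netProdFrom V j = netProdFrom W j := by
  induction j using Fin.reverseInduction with
  | last => rw [netProdFrom_last, netProdFrom_last]
  | cast i ih =>
    rw [netProdFrom_castSucc, netProdFrom_castSucc, hVW i le_rfl,
      ih fun k hk => hVW k (i.castSucc_lt_succ.le.trans hk)]

theorem netProd_update (i : Fin (H + 1)) (M : Matrix (Fin (d i.succ)) (Fin (d i.castSucc)) ℝ) :
    netProd (Function.update W i M) =
      netProdFrom W i.succ * (M * netProdUpTo W i.castSucc) := by
  have hfrom : netProdFrom (Function.update W i M) i.succ = netProdFrom W i.succ :=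
    netProdFrom_congr fun k hk =>
      have hik : i < k := Fin.castSucc_lt_castSucc_iff.mp (i.castSucc_lt_succ.trans_le hk)
      Function.update_of_ne hik.ne' ..
  have hupTo : netProdUpTo (Function.update W i M) i.castSucc = netProdUpTo W i.castSucc :=
    netProdUpTo_congr fun k hk =>
      Function.update_of_ne (Fin.castSucc_lt_castSucc_iff.mp hk).ne ..
  rw [← netProdFrom_mul_netProdUpTo _ i.succ, netProdUpTo_succ, hfrom, hupTo,
    Function.update_self]

theorem differentiable_netProdUpTo (j : Fin (H + 2)) :
    Differentiable ℝ fun W : ∀ i : Fin (H + 1),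
      Matrix (Fin (d i.succ)) (Fin (d i.castSucc)) ℝ => netProdUpTo W j := by
  induction j using Fin.induction with
  | zero => exact differentiable_const _
  | succ i ih =>
    simp only [netProdUpTo_succ]
    exact differentiable_matrix_mul (differentiable_apply i) ih

theorem differentiable_netProd : Differentiable ℝ (netProd (H := H) (d := d)) :=
  differentiable_netProdUpTo _

theorem fderiv_netProd_single (i : Fin (H + 1))
    (D : Matrix (Fin (d i.succ)) (Fin (d i.castSucc)) ℝ) :
    fderiv ℝ netProd W (Pi.single i D) =
      netProdFrom W i.succ * (D * netProdUpTo W i.castSucc) := by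
  let V : ∀ i : Fin (H + 1), Matrix (Fin (d i.succ)) (Fin (d i.castSucc)) ℝ := Pi.single i D
  have hline (t : ℝ) : netProd (W + t • V) =
      netProd W + t • (netProdFrom W i.succ * (D * netProdUpTo W i.castSucc)) := by
    have hupdate : W + t • V = Function.update W i (W i + t • D) := by
      ext1 k
      obtain rfl | hk := eq_or_ne k i <;> simp [V, *]
    rw [hupdate, netProd_update, Matrix.add_mul, Matrix.mul_add, ← netProd_update,
      Function.update_eq_self, Matrix.smul_mul, Matrix.mul_smul]
  have hderiv := (differentiable_netProd W).hasFDerivAt.hasLineDerivAt V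
  simp only [HasLineDerivAt, hline] at hderiv
  refine hderiv.unique ?_
  simpa using ((hasDerivAt_id (0 : ℝ)).smul_const _).const_add (netProd W)

variable {W} in
theorem surjective_fderiv_netProd_of_rank_eq (i : Fin (H + 1))
    (hfrom : (netProdFrom W i.succ).rank = d (Fin.last (H + 1)))
    (hupTo : (netProdUpTo W i.castSucc).rank = d 0) :
    Function.Surjective (fderiv ℝ netProd W) := by
  intro C
  obtain ⟨D, hD⟩ :=
    surjective_mul_mul_of_rank_eq_card (by simpa using hfrom) (by simpa using hupTo) C
  exact ⟨Pi.single i D, (fderiv_netProd_single W i D).trans hD⟩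

variable {W} in
theorem surjective_fderiv_netProd_of_rank_netProd_eq_min
    (hrank : (netProd W).rank = min (d 0) (d (Fin.last (H + 1)))) :
    Function.Surjective (fderiv ℝ netProd W) := by
  rcases le_total (d (Fin.last (H + 1))) (d 0) with hle | hle
  · refine surjective_fderiv_netProd_of_rank_eq 0 (le_antisymm (rank_le_height _) ?_) ?_
    · calc d (Fin.last (H + 1)) = (netProd W).rank := by rw [hrank, min_eq_right hle]
        _ = (netProdFrom W (Fin.succ 0) * netProdUpTo W (Fin.succ 0)).rank := by
          rw [netProdFrom_mul_netProdUpTo]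
        _ ≤ (netProdFrom W (Fin.succ 0)).rank := rank_mul_le_left _ _
    · rw [Fin.castSucc_zero, netProdUpTo_zero, rank_one, Fintype.card_fin]
  · refine surjective_fderiv_netProd_of_rank_eq (Fin.last H) ?_ (le_antisymm (rank_le_width _) ?_)
    · rw [Fin.succ_last, netProdFrom_last, rank_one, Fintype.card_fin]
    · calc d 0 = (netProd W).rank := by rw [hrank, min_eq_left hle]
        _ = (netProdFrom W (Fin.last H).castSucc * netProdUpTo W (Fin.last H).castSucc).rank := by
          rw [netProdFrom_mul_netProdUpTo]
        _ ≤ (netProdUpTo W (Fin.last H).castSucc).rank := rank_mul_le_right _ _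

end LinearNetwork

theorem critical_point_of_full_rank_is_global_min_general {H : ℕ} {d : Fin (H + 2) → ℕ}
    {ℓ : Matrix (Fin (d (Fin.last (H + 1)))) (Fin (d 0)) ℝ → ℝ} (hconv : ConvexOn ℝ Set.univ ℓ)
    {W : ∀ i : Fin (H + 1), Matrix (Fin (d i.succ)) (Fin (d i.castSucc)) ℝ}
    (hdiff : DifferentiableAt ℝ ℓ (netProd W)) (hcrit : fderiv ℝ (ℓ ∘ netProd) W = 0)
    (hrank : (netProd W).rank = min (d 0) (d (Fin.last (H + 1)))) :
    IsMinOn ℓ Set.univ (netProd W) := by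
  have hzero : fderiv ℝ ℓ (netProd W) = 0 :=
    fderiv_eq_zero_of_fderiv_comp_eq_zero_of_surjective hdiff (differentiable_netProd W)
      (surjective_fderiv_netProd_of_rank_netProd_eq_min hrank) hcrit
  exact isMinOn_of_convexOn_of_hasFDerivAt_zero hconv (Set.mem_univ _)
    (hzero ▸ hdiff.hasFDerivAt)

theorem critical_point_of_full_rank_is_global_min
    (H m : ℕ) (hH : 1 ≤ H) (d : Fin (H + 2) → ℕ) (hd : ∀ j, 0 < d j)
    (X : Matrix (Fin (d 0)) (Fin m) ℝ)
    (Y : Matrix (Fin (d (Fin.last (H + 1)))) (Fin m) ℝ)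
    (k : ℕ) (hk : k = min (d 0) (d (Fin.last (H + 1))))
    (hwidth : Finset.univ.inf' Finset.univ_nonempty d = k)
    (W : ∀ i : Fin (H + 1), Matrix (Fin (d i.succ)) (Fin (d i.castSucc)) ℝ)
    (hcrit : fderiv ℝ (netLoss X Y) W = 0)
    (hrank : (netProd W).rank = k) :
    ∀ V : ∀ i : Fin (H + 1), Matrix (Fin (d i.succ)) (Fin (d i.castSucc)) ℝ,
      netLoss X Y W ≤ netLoss X Y V :=
  fun V => critical_point_of_full_rank_is_global_min_general (convexOn_squaredError X Y)
    (differentiable_squaredError X Y _) hcrit (hrank.trans hk) (Set.mem_univ (netProd V))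
end

section
/- Assume x ≠ 0. Then w ∈ ℝ^n is a critical point of l (i.e., ∇l(w) = 0) if and only if either (∏_{k=1}^n w_k) x = y, or there exist indices i ≠ j with w_i = 0 and w_j = 0. In the first case l(w) = 0 (a global minimum); in the second case l(w) = ½y². Thus the critical set of l is the union of the global minimum set {w : (∏_k w_k) x = y} and the C(n,2) coordinate subspaces {w : w_i = w_j = 0} for i < j, all of which contain the origin. -/
/-- The width-one linear network loss `l(w) = ½(y − (∏ₖ wₖ) x)²`. -/
noncomputable def wLoss (n : ℕ) (x y : ℝ) (w : Fin n → ℝ) : ℝ :=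
  (1 / 2) * (y - (∏ k, w k) * x) ^ 2

/-- The partial derivative of `f` with respect to the `i`-th coordinate, at `w`. -/
noncomputable def pderivAt {n : ℕ} (i : Fin n) (f : (Fin n → ℝ) → ℝ)
    (w : Fin n → ℝ) : ℝ :=
  deriv (fun t => f (Function.update w i t)) (w i)

/-- The Hessian matrix of the width-one loss at `w`. -/
noncomputable def wHess (n : ℕ) (x y : ℝ) (w : Fin n → ℝ) : Matrix (Fin n) (Fin n) ℝ :=
  Matrix.of fun a b => pderivAt b (pderivAt a (wLoss n x y)) w

/-!
By the chain rule `∇l(w)` is `((∏ₖ wₖ) x − y) x` times the gradient of the coordinate product. The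
`i`-th entry of the latter is `∏_{j ≠ i} wⱼ`, so it vanishes exactly when every index `i` is avoided
by some zero of `w`, which is to say that `w` has at least two zeros.
-/

theorem nontrivial_iff_forall_exists_ne {α : Type*} [Nonempty α] {s : Set α} :
    s.Nontrivial ↔ ∀ a, ∃ b ∈ s, b ≠ a := by
  refine ⟨Set.Nontrivial.exists_ne, fun h => ?_⟩
  obtain ⟨a, ha, -⟩ := h (Classical.arbitrary α)
  exact (Set.nontrivial_iff_exists_ne ha).mpr (h a)

section CoordinateProduct

variable {ι 𝕜 𝔸 : Type*} [Fintype ι] [NontriviallyNormedField 𝕜] [NormedCommRing 𝔸]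
  [NormedAlgebra 𝕜 𝔸]

theorem fderiv_prod_apply_single [DecidableEq ι] (w : ι → 𝔸) (i : ι) (a : 𝔸) :
    fderiv 𝕜 (fun v : ι → 𝔸 => ∏ k, v k) w (Pi.single i a) =
      (∏ j ∈ Finset.univ.erase i, w j) * a := by
  rw [hasFDerivAt_finsetProd.fderiv]
  simp [Pi.single_apply]

theorem fderiv_prod_eq_zero_iff [Nonempty ι] [IsDomain 𝔸] {w : ι → 𝔸} :
    fderiv 𝕜 (fun v : ι → 𝔸 => ∏ k, v k) w = 0 ↔ {k | w k = 0}.Nontrivial := by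
  classical
  calc fderiv 𝕜 (fun v : ι → 𝔸 => ∏ k, v k) w = 0
      ↔ ∀ i a, fderiv 𝕜 (fun v : ι → 𝔸 => ∏ k, v k) w (Pi.single i a) = 0 := by
        rw [← ContinuousLinearMap.coe_inj]
        exact LinearMap.pi_ext_iff
    _ ↔ ∀ i, ∏ j ∈ Finset.univ.erase i, w j = 0 := by
        simp only [fderiv_prod_apply_single]
        exact forall_congr' fun i => ⟨fun h => by simpa using h 1, fun h a => by rw [h, zero_mul]⟩
    _ ↔ ∀ i, ∃ j ∈ {k | w k = 0}, j ≠ i := by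
        simp [Finset.prod_eq_zero_iff, and_comm]
    _ ↔ {k | w k = 0}.Nontrivial := nontrivial_iff_forall_exists_ne.symm

end CoordinateProduct

section Loss

theorem wLoss_nonneg (n : ℕ) (x y : ℝ) (w : Fin n → ℝ) : 0 ≤ wLoss n x y w := by
  unfold wLoss
  positivity

theorem fderiv_wLoss (n : ℕ) (x y : ℝ) (w : Fin n → ℝ) :
    fderiv ℝ (wLoss n x y) w =
      (((∏ k, w k) * x - y) * x) • fderiv ℝ (fun v : Fin n → ℝ => ∏ k, v k) w := by
  have hprod : DifferentiableAt ℝ (fun v : Fin n → ℝ => ∏ k, v k) w := by fun_prop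
  have hloss : HasFDerivAt (wLoss n x y) _ w :=
    (((hprod.hasFDerivAt.mul_const x).const_sub y).pow 2).const_mul (1 / 2)
  rw [hloss.fderiv]
  module

variable {n : ℕ} {x y : ℝ} {w : Fin n → ℝ}

theorem wLoss_eq_zero_iff : wLoss n x y w = 0 ↔ (∏ k, w k) * x = y := by
  simp [wLoss, sub_eq_zero, eq_comm]

theorem wLoss_of_apply_eq_zero {i : Fin n} (hi : w i = 0) : wLoss n x y w = (1 / 2) * y ^ 2 := by
  rw [wLoss, Finset.prod_eq_zero (Finset.mem_univ i) hi, zero_mul, sub_zero]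

theorem fderiv_wLoss_eq_zero_iff [NeZero n] (hx : x ≠ 0) :
    fderiv ℝ (wLoss n x y) w = 0 ↔ (∏ k, w k) * x = y ∨ {k | w k = 0}.Nontrivial := by
  simp only [fderiv_wLoss, smul_eq_zero, mul_eq_zero, hx, or_false, sub_eq_zero,
    fderiv_prod_eq_zero_iff]

end Loss

theorem width_one_critical_points
    (n : ℕ) (hn : 2 ≤ n) (x y : ℝ) (hx : x ≠ 0) :
    (∀ w : Fin n → ℝ, fderiv ℝ (wLoss n x y) w = 0 ↔
      ((∏ k, w k) * x = y ∨ ∃ i j : Fin n, i ≠ j ∧ w i = 0 ∧ w j = 0)) ∧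
    (∀ w : Fin n → ℝ, (∏ k, w k) * x = y →
      wLoss n x y w = 0 ∧ ∀ v : Fin n → ℝ, wLoss n x y w ≤ wLoss n x y v) ∧
    (∀ w : Fin n → ℝ, (∃ i j : Fin n, i ≠ j ∧ w i = 0 ∧ w j = 0) →
      wLoss n x y w = (1 / 2) * y ^ 2) ∧
    ({w : Fin n → ℝ | fderiv ℝ (wLoss n x y) w = 0} =
      {w : Fin n → ℝ | (∏ k, w k) * x = y} ∪
        ⋃ (i : Fin n) (j : Fin n) (_ : i < j), {w : Fin n → ℝ | w i = 0 ∧ w j = 0}) ∧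
    (∀ i j : Fin n, i < j → (0 : Fin n → ℝ) ∈ {w : Fin n → ℝ | w i = 0 ∧ w j = 0}) := by
  have : NeZero n := ⟨by lia⟩
  refine ⟨fun w => ?_, fun w hw => ?_, fun w ⟨i, _, _, hi, _⟩ => wLoss_of_apply_eq_zero hi, ?_,
    fun i j _ => ⟨rfl, rfl⟩⟩
  · rw [fderiv_wLoss_eq_zero_iff hx]
    simp only [Set.Nontrivial, Set.mem_ofPred_eq]
    grind
  · have hmin : wLoss n x y w = 0 := wLoss_eq_zero_iff.mpr hw
    exact ⟨hmin, fun v => hmin.le.trans (wLoss_nonneg n x y v)⟩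
  · ext w
    simp only [Set.mem_ofPred_eq, fderiv_wLoss_eq_zero_iff hx, Set.nontrivial_iff_exists_lt,
      Set.mem_union, Set.mem_iUnion, exists_prop]
    grind
end

section
/- Suppose x ≠ 0, all coordinates w_k ≠ 0, and (∏_{k=1}^n w_k) x = y (so w lies on the global minimum component). Then the Hessian matrix of l at w equals x² v vᵀ, where v ∈ ℝ^n has coordinates v_i = ∏_{k ≠ i} w_k. Consequently the Hessian has rank at most 1: its eigenvalues are 0 with multiplicity n − 1 together with the single eigenvalue x² ‖v‖² = ∑_{k=1}^n y² / w_k². -/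
/- On the zero-residual set the Hessian of a squared residual loses its second-order term and is
the outer product of the gradient of the residual with itself, here `-x • v`. A rank-one matrix
`u vᵀ` has characteristic polynomial `X ^ (n - 1) * (X - u ⬝ᵥ v)`, and `w k ≠ 0` gives
`v k = (∏ i, w i) / w k`, so that `x * v k = y / w k`. -/

section ProdErase

variable {ι 𝕜 : Type*} [DecidableEq ι] (s : Finset ι) (w : ι → 𝕜)

theorem hasDerivAt_prod_update [NontriviallyNormedField 𝕜] (i : ι) (t : 𝕜) :
    HasDerivAt (fun t => ∏ k ∈ s, Function.update w i t k)
      (if i ∈ s then ∏ k ∈ s.erase i, w k else 0) t := by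
  split_ifs with hi
  · simpa only [Finset.prod_update_of_mem hi, Finset.sdiff_singleton_eq_erase, one_mul]
      using (hasDerivAt_id' t).mul_const (∏ k ∈ s.erase i, w k)
  · simpa only [Finset.prod_update_of_notMem hi] using hasDerivAt_const t (∏ k ∈ s, w k)

variable {s w}

theorem prod_erase_eq_div₀ [CommGroupWithZero 𝕜] {i : ι} (hi : i ∈ s) (hw : w i ≠ 0) :
    ∏ k ∈ s.erase i, w k = (∏ k ∈ s, w k) / w i :=
  eq_div_of_mul_eq hw (Finset.prod_erase_mul s w hi)

theorem sq_mul_sum_prod_erase_sq [Semifield 𝕜] (hw : ∀ k ∈ s, w k ≠ 0) (c : 𝕜) :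
    c ^ 2 * ∑ i ∈ s, (∏ k ∈ s.erase i, w k) ^ 2
      = ∑ k ∈ s, ((∏ i ∈ s, w i) * c) ^ 2 / w k ^ 2 := by
  rw [Finset.mul_sum]
  refine Finset.sum_congr rfl fun i hi => ?_
  rw [prod_erase_eq_div₀ hi (hw i hi)]
  ring

end ProdErase

theorem charpoly_vecMulVec_eq_X_pow_mul {ι R : Type*} [Fintype ι] [DecidableEq ι] [Nonempty ι]
    [CommRing R] (u v : ι → R) :
    (Matrix.vecMulVec u v).charpoly
      = Polynomial.X ^ (Fintype.card ι - 1) * (Polynomial.X - Polynomial.C (u ⬝ᵥ v)) := by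
  rw [Matrix.charpoly_vecMulVec, Polynomial.smul_eq_C_mul, mul_sub,
    pow_sub_one_mul Fintype.card_ne_zero, mul_comm (Polynomial.C _)]

section WidthOneLoss

variable {n : ℕ} (x y : ℝ)

theorem pderivAt_wLoss (a : Fin n) (w : Fin n → ℝ) :
    pderivAt a (wLoss n x y) w
      = -((y - (∏ k, w k) * x) * x * ∏ k ∈ Finset.univ.erase a, w k) := by
  have hprod := hasDerivAt_prod_update Finset.univ w a (w a)
  have hloss := (((hprod.mul_const x).const_sub y).pow 2).const_mul (1 / 2)
  refine hloss.deriv.trans ?_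
  simp only [Finset.mem_univ, if_true, Function.update_eq_self]
  ring

theorem wHess_apply (w : Fin n → ℝ) (a b : Fin n) :
    wHess n x y w a b
      = x ^ 2 * ((∏ k ∈ Finset.univ.erase a, w k) * ∏ k ∈ Finset.univ.erase b, w k)
        - (y - (∏ k, w k) * x) * x *
          if b ∈ Finset.univ.erase a then ∏ k ∈ (Finset.univ.erase a).erase b, w k else 0 := by
  have hprod := hasDerivAt_prod_update Finset.univ w b (w b)
  have herase := hasDerivAt_prod_update (Finset.univ.erase a) w b (w b)
  have hgrad := ((((hprod.mul_const x).const_sub y).mul_const x).mul herase).neg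
  rw [wHess, Matrix.of_apply, funext (pderivAt_wLoss x y a)]
  refine hgrad.deriv.trans ?_
  simp only [Finset.mem_univ, if_true, Function.update_eq_self]
  ring

variable {x y}

theorem wHess_eq_smul_vecMulVec {w : Fin n → ℝ} (hglob : (∏ k, w k) * x = y) :
    wHess n x y w
      = x ^ 2 • Matrix.vecMulVec (fun i => ∏ k ∈ Finset.univ.erase i, w k)
          (fun i => ∏ k ∈ Finset.univ.erase i, w k) := by
  ext a b
  rw [wHess_apply, hglob, sub_self, zero_mul, zero_mul, sub_zero]
  rfl

end WidthOneLoss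

theorem width_one_hessian_on_global_min_component
    (n : ℕ) (hn : 2 ≤ n) (x y : ℝ) (hx : x ≠ 0) (w : Fin n → ℝ)
    (hw : ∀ k, w k ≠ 0) (hglob : (∏ k, w k) * x = y) :
    wHess n x y w
      = x ^ 2 • Matrix.vecMulVec (fun i => ∏ k ∈ Finset.univ.erase i, w k)
          (fun i => ∏ k ∈ Finset.univ.erase i, w k) ∧
    (wHess n x y w).rank ≤ 1 ∧
    x ^ 2 * (∑ i, (∏ k ∈ Finset.univ.erase i, w k) ^ 2) = ∑ k, y ^ 2 / (w k) ^ 2 ∧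
    (wHess n x y w).charpoly
      = Polynomial.X ^ (n - 1)
        * (Polynomial.X - Polynomial.C (∑ k, y ^ 2 / (w k) ^ 2)) := by
  have : Nonempty (Fin n) := ⟨⟨0, by lia⟩⟩
  have hHess := wHess_eq_smul_vecMulVec hglob
  have hsum : x ^ 2 * (∑ i, (∏ k ∈ Finset.univ.erase i, w k) ^ 2) = ∑ k, y ^ 2 / (w k) ^ 2 := by
    rw [sq_mul_sum_prod_erase_sq (fun k _ => hw k), hglob]
  refine ⟨hHess, ?_, hsum, ?_⟩
  · rw [hHess, ← Matrix.smul_vecMulVec]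
    exact Matrix.rank_vecMulVec_le _ _
  · rw [hHess, ← Matrix.smul_vecMulVec, charpoly_vecMulVec_eq_X_pow_mul, Fintype.card_fin,
      smul_dotProduct, smul_eq_mul, ← hsum]
    simp only [dotProduct, sq]
end
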